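/- Define, for 0 < r < 1, p(r) := −1/(π r^{3/5} log(r²)) + π⁻¹ Σ_{j=0}^∞ ( r^{2j}/(1 − r^{3/5+2j})² + r^{2j+4/5}/(1 − r^{2j+7/5})² ). Then p(r) = −1/(π r^{3/5} log(r²)) + π⁻¹ ( 1 + 2 r^{3/5} + r^{4/5} + 3 r^{6/5} ) + O(r^{9/5}) as r → 0⁺. -/

import Mathlib

/-- The value `K(r^{3/10}, r^{3/10})` of the Bergman kernel of the annulus `P_r`
at the point `r^{3/10}`. -/
noncomputable def pVal (r : ℝ) : ℝ :=
  -1 / (Real.pi * r ^ ((3 : ℝ) / 5) * Real.log (r ^ 2)) +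
    Real.pi⁻¹ * ∑' j : ℕ,
      (r ^ (2 * (j : ℝ)) / (1 - r ^ ((3 : ℝ) / 5 + 2 * (j : ℝ))) ^ 2 +
        r ^ (2 * (j : ℝ) + (4 : ℝ) / 5) / (1 - r ^ (2 * (j : ℝ) + (7 : ℝ) / 5)) ^ 2)

/-!
Put `t = |z|²` and `S(q, t) = ∑ qʲ / (1 - qʲ t)²`. The Bergman kernel of the annulus satisfies
`π K(z, z) = -1 / (t log r²) + S(r², t) + (r² / t²) S(r², r² / t)`, and here `t = r^{3/5}`.
In `S(q, t)` all terms but the first add up to `O(q)`, and the first, `1 / (1 - t)²`, expands as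
`∑ (k + 1) tᵏ`. Up to `O(r^{9/5})` only three terms of this expansion survive in
`S(r², r^{3/5})`, and only one in `r^{4/5} S(r², r^{7/5})`.
-/

open Asymptotics Filter Finset Topology

section Algebra

variable {K : Type*} [Field K]

theorem one_sub_sq_mul_sum_range_succ_mul_pow (t : K) (n : ℕ) :
    (1 - t) ^ 2 * ∑ k ∈ range n, (k + 1) * t ^ k = 1 - t ^ n * (n + 1 - n * t) := by
  induction n with
  | zero => simp
  | succ n ih =>
    rw [sum_range_succ, mul_add, ih]
    push_cast
    ring

theorem one_div_one_sub_sq_sub_sum_range {t : K} (ht : t ≠ 1) (n : ℕ) :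
    1 / (1 - t) ^ 2 - ∑ k ∈ range n, (k + 1) * t ^ k =
      t ^ n * ((n + 1 - n * t) / (1 - t) ^ 2) := by
  have hsq : (1 - t) ^ 2 ≠ 0 := pow_ne_zero 2 (sub_ne_zero.2 ht.symm)
  rw [← mul_div_assoc, eq_div_iff hsq, sub_mul, one_div_mul_cancel hsq, mul_comm _ ((1 - t) ^ 2),
    one_sub_sq_mul_sum_range_succ_mul_pow, sub_sub_cancel]

end Algebra

/-- The series `S(q, t) = ∑ qʲ / (1 - qʲ t)²`. For `q = r²`, the series in the Bergman kernel of the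
annulus `r < |z| < 1` splits into `S(q, |z|²)` and `(q / |z|⁴) S(q, q / |z|²)`, one for each of the
two boundary circles. -/
noncomputable def annulusSeries {𝕜 : Type*} [NormedField 𝕜] (q t : 𝕜) : 𝕜 :=
  ∑' j : ℕ, q ^ j / (1 - q ^ j * t) ^ 2

section NormedField

variable {𝕜 : Type*} [NormedField 𝕜] {q t : 𝕜}

theorem norm_pow_div_one_sub_pow_mul_sq_le (hq : ‖q‖ ≤ 1) (ht : ‖t‖ < 1) (j : ℕ) :
    ‖q ^ j / (1 - q ^ j * t) ^ 2‖ ≤ ‖q‖ ^ j / (1 - ‖t‖) ^ 2 := by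
  have hqt : ‖q ^ j * t‖ ≤ ‖t‖ := by
    rw [norm_mul, norm_pow]
    exact mul_le_of_le_one_left (norm_nonneg t) (pow_le_one₀ (norm_nonneg q) hq)
  have hden : 1 - ‖t‖ ≤ ‖1 - q ^ j * t‖ := calc
    1 - ‖t‖ ≤ ‖(1 : 𝕜)‖ - ‖q ^ j * t‖ := by rw [norm_one]; gcongr
    _ ≤ ‖1 - q ^ j * t‖ := norm_sub_norm_le _ _
  have : 0 < 1 - ‖t‖ := sub_pos.2 ht
  rw [norm_div, norm_pow, norm_pow]
  gcongr

theorem one_div_one_sub_sq_sub_sum_range_isBigO (n : ℕ) :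
    (fun t : 𝕜 ↦ 1 / (1 - t) ^ 2 - ∑ k ∈ range n, (k + 1) * t ^ k) =O[𝓝 0] fun t ↦ t ^ n := by
  have hcont : ContinuousAt (fun t : 𝕜 ↦ (n + 1 - n * t) / (1 - t) ^ 2) 0 := by
    fun_prop (disch := simp)
  have hrem : (fun t : 𝕜 ↦ t ^ n * ((n + 1 - n * t) / (1 - t) ^ 2)) =O[𝓝 0] fun t ↦ t ^ n := by
    simpa only [mul_one] using (isBigO_refl (fun t : 𝕜 ↦ t ^ n) (𝓝 0)).mul (hcont.isBigO_one 𝕜)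
  refine hrem.congr' ?_ EventuallyEq.rfl
  filter_upwards [eventually_ne_nhds (zero_ne_one (α := 𝕜))] with t ht
  exact (one_div_one_sub_sq_sub_sum_range ht n).symm

variable [CompleteSpace 𝕜]

theorem summable_annulusSeries (hq : ‖q‖ < 1) (ht : ‖t‖ < 1) :
    Summable fun j : ℕ ↦ q ^ j / (1 - q ^ j * t) ^ 2 :=
  .of_norm_bounded ((summable_geometric_of_lt_one (norm_nonneg q) hq).div_const _)
    (norm_pow_div_one_sub_pow_mul_sq_le hq.le ht)

theorem norm_annulusSeries_sub_one_div_le (hq : ‖q‖ < 1) (ht : ‖t‖ < 1) :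
    ‖annulusSeries q t - 1 / (1 - t) ^ 2‖ ≤ ‖q‖ / ((1 - ‖q‖) * (1 - ‖t‖) ^ 2) := by
  have htail : annulusSeries q t - 1 / (1 - t) ^ 2 =
      ∑' j : ℕ, q ^ (j + 1) / (1 - q ^ (j + 1) * t) ^ 2 := by
    rw [annulusSeries, (summable_annulusSeries hq ht).tsum_eq_zero_add, pow_zero, one_mul,
      add_sub_cancel_left]
  have hgeom : HasSum (fun j : ℕ ↦ ‖q‖ ^ (j + 1) / (1 - ‖t‖) ^ 2)
      (‖q‖ / ((1 - ‖q‖) * (1 - ‖t‖) ^ 2)) := by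
    simpa only [← pow_succ', ← div_eq_mul_inv, div_div] using
      ((hasSum_geometric_of_lt_one (norm_nonneg q) hq).mul_left ‖q‖).div_const ((1 - ‖t‖) ^ 2)
  rw [htail]
  exact tsum_of_norm_bounded hgeom fun j ↦ norm_pow_div_one_sub_pow_mul_sq_le hq.le ht (j + 1)

theorem annulusSeries_sub_one_div_isBigO :
    (fun p : 𝕜 × 𝕜 ↦ annulusSeries p.1 p.2 - 1 / (1 - p.2) ^ 2) =O[𝓝 0] Prod.fst := by
  have hcont : ContinuousAt (fun p : 𝕜 × 𝕜 ↦ ((1 - ‖p.1‖) * (1 - ‖p.2‖) ^ 2)⁻¹) 0 := by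
    fun_prop (disch := simp)
  have hbound : (fun p : 𝕜 × 𝕜 ↦ ‖p.1‖ / ((1 - ‖p.1‖) * (1 - ‖p.2‖) ^ 2)) =O[𝓝 0] Prod.fst := by
    refine IsBigO.of_norm_right ?_
    simpa only [mul_one, div_eq_mul_inv] using
      (isBigO_refl (fun p : 𝕜 × 𝕜 ↦ ‖p.1‖) (𝓝 0)).mul (hcont.isBigO_one ℝ)
  refine IsBigO.trans (.of_norm_eventuallyLE ?_) hbound
  filter_upwards [Metric.ball_mem_nhds (0 : 𝕜 × 𝕜) one_pos] with p hp
  rw [mem_ball_zero_iff, Prod.norm_def, max_lt_iff] at hp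
  exact norm_annulusSeries_sub_one_div_le hp.1 hp.2

theorem annulusSeries_sub_sum_range_isBigO (n : ℕ) :
    (fun p : 𝕜 × 𝕜 ↦ annulusSeries p.1 p.2 - ∑ k ∈ range n, (k + 1) * p.2 ^ k) =O[𝓝 0]
      fun p ↦ ‖p.1‖ + ‖p.2 ^ n‖ := by
  have hfirst := (one_div_one_sub_sq_sub_sum_range_isBigO (𝕜 := 𝕜) n).comp_tendsto
    (continuous_snd.tendsto (0 : 𝕜 × 𝕜))
  simpa using annulusSeries_sub_one_div_isBigO.norm_right.add_add hfirst.norm_right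

end NormedField

theorem tendsto_rpow_nhdsGT_zero {a : ℝ} (ha : 0 < a) :
    Tendsto (fun r : ℝ ↦ r ^ a) (𝓝[>] 0) (𝓝 0) :=
  ((Real.continuous_rpow_const ha.le).tendsto' 0 0 (Real.zero_rpow ha.ne')).mono_left
    nhdsWithin_le_nhds

theorem annulusSeries_rpow_sub_sum_range_isBigO {a b c : ℝ} {n : ℕ} (hc : 0 < c) (hcb : c ≤ b)
    (hca : c ≤ a * n) :
    (fun r : ℝ ↦ annulusSeries (r ^ b) (r ^ a) - ∑ k ∈ range n, (k + 1) * (r ^ a) ^ k)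
      =O[𝓝[>] 0] fun r ↦ r ^ c := by
  have hb : 0 < b := hc.trans_le hcb
  have han : 0 < a * n := hc.trans_le hca
  have ha : 0 < a := pos_of_mul_pos_left han n.cast_nonneg
  have hlim : Tendsto (fun r : ℝ ↦ (r ^ b, r ^ a)) (𝓝[>] 0) (𝓝 0) :=
    (tendsto_rpow_nhdsGT_zero hb).prodMk_nhds (tendsto_rpow_nhdsGT_zero ha)
  have hle : 𝓝[>] (0 : ℝ) ≤ 𝓝[≥] 0 := nhdsWithin_mono 0 Set.Ioi_subset_Ici_self
  have hq : (fun r : ℝ ↦ r ^ b) =O[𝓝[>] 0] fun r ↦ r ^ c :=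
    (IsBigO.rpow_rpow_nhdsGE_zero_of_le hcb hb.ne').mono hle
  have ht : (fun r : ℝ ↦ (r ^ a) ^ n) =O[𝓝[>] 0] fun r ↦ r ^ c := by
    refine ((IsBigO.rpow_rpow_nhdsGE_zero_of_le hca han.ne').mono hle).congr' ?_ EventuallyEq.rfl
    filter_upwards [self_mem_nhdsWithin] with r hr
    exact Real.rpow_mul_natCast hr.le a n
  exact ((annulusSeries_sub_sum_range_isBigO n).comp_tendsto hlim).trans
    (hq.norm_left.add ht.norm_left)

theorem exists_forall_abs_div_le_of_isBigO_nhdsGT_zero {f g : ℝ → ℝ} (h : f =O[𝓝[>] 0] g) :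
    ∃ δ > 0, ∃ C, ∀ r, 0 < r → r < δ → |f r / g r| ≤ C := by
  obtain ⟨C, hC⟩ := (div_isBoundedUnder_of_isBigO h).eventually_le
  obtain ⟨δ, hδ, hsub⟩ := mem_nhdsGT_iff_exists_Ioo_subset.1 hC
  exact ⟨δ, hδ, C, fun r hr hrδ ↦ hsub ⟨hr, hrδ⟩⟩

theorem pVal_eq_annulusSeries {r : ℝ} (hr₀ : 0 < r) (hr₁ : r < 1) :
    pVal r = -1 / (Real.pi * r ^ ((3 : ℝ) / 5) * Real.log (r ^ 2)) +
      Real.pi⁻¹ * (annulusSeries (r ^ (2 : ℝ)) (r ^ ((3 : ℝ) / 5)) +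
        r ^ ((4 : ℝ) / 5) * annulusSeries (r ^ (2 : ℝ)) (r ^ ((7 : ℝ) / 5))) := by
  have hnorm {a : ℝ} (ha : 0 < a) : ‖r ^ a‖ < 1 := by
    rw [Real.norm_of_nonneg (by positivity)]
    exact Real.rpow_lt_one hr₀.le hr₁ ha
  have hsum {a : ℝ} (ha : 0 < a) := summable_annulusSeries (hnorm two_pos) (hnorm ha)
  rw [annulusSeries, annulusSeries, ← tsum_mul_left,
    ← (hsum (by norm_num)).tsum_add ((hsum (by norm_num)).mul_left _), pVal]
  congr! 4 with j
  simp only [Real.rpow_add hr₀, Real.rpow_mul_natCast hr₀.le]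
  ring

theorem pVal_sub_isBigO :
    (fun r ↦ pVal r + 1 / (Real.pi * r ^ ((3 : ℝ) / 5) * Real.log (r ^ 2)) -
      Real.pi⁻¹ * (1 + 2 * r ^ ((3 : ℝ) / 5) + r ^ ((4 : ℝ) / 5) + 3 * r ^ ((6 : ℝ) / 5)))
      =O[𝓝[>] 0] fun r ↦ r ^ ((9 : ℝ) / 5) := by
  have houter := annulusSeries_rpow_sub_sum_range_isBigO (a := 3 / 5) (b := 2) (c := 9 / 5) (n := 3)
    (by norm_num) (by norm_num) (by norm_num)
  have hinner := annulusSeries_rpow_sub_sum_range_isBigO (a := 7 / 5) (b := 2) (c := 1) (n := 1)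
    (by norm_num) (by norm_num) (by norm_num)
  have hweighted : (fun r : ℝ ↦ r ^ ((4 : ℝ) / 5) *
      (annulusSeries (r ^ (2 : ℝ)) (r ^ ((7 : ℝ) / 5)) -
        ∑ k ∈ range 1, (k + 1) * (r ^ ((7 : ℝ) / 5)) ^ k)) =O[𝓝[>] 0]
      fun r ↦ r ^ ((9 : ℝ) / 5) := by
    refine ((isBigO_refl _ _).mul hinner).congr' EventuallyEq.rfl ?_
    filter_upwards [self_mem_nhdsWithin] with r hr
    rw [← Real.rpow_add hr]
    norm_num
  refine ((houter.add hweighted).const_mul_left Real.pi⁻¹).congr' ?_ EventuallyEq.rfl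
  filter_upwards [Ioo_mem_nhdsGT one_pos] with r hr
  have hsq : r ^ ((6 : ℝ) / 5) = (r ^ ((3 : ℝ) / 5)) ^ 2 := by
    rw [← Real.rpow_mul_natCast hr.1.le]
    norm_num
  rw [pVal_eq_annulusSeries hr.1 hr.2, hsq]
  simp only [sum_range_succ, sum_range_zero]
  push_cast
  ring

/-- `p(r) = −1/(π r^{3/5} log(r²)) + π⁻¹(1 + 2r^{3/5} + r^{4/5} + 3r^{6/5}) + O(r^{9/5})`
as `r → 0⁺`. -/
theorem pVal_asymptotics :
    ∃ δ > (0 : ℝ), ∃ C : ℝ, ∀ r : ℝ, 0 < r → r < δ →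
      |(pVal r + 1 / (Real.pi * r ^ ((3 : ℝ) / 5) * Real.log (r ^ 2)) -
          Real.pi⁻¹ * (1 + 2 * r ^ ((3 : ℝ) / 5) + r ^ ((4 : ℝ) / 5) +
            3 * r ^ ((6 : ℝ) / 5))) / r ^ ((9 : ℝ) / 5)| ≤ C :=
  exists_forall_abs_div_le_of_isBigO_nhdsGT_zero pVal_sub_isBigO
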